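/- For every integer t ≥ 81, φ(t) ≥ ⌊(t/3)^{1/3}⌋, and consequently φ(t) ≥ (1/2)·(t/3)^{1/3}. Combined with the upper bound φ(t) ≤ Λ(t), this gives φ(t) = Θ(t^{1/3}). -/

import Mathlib

/-!
An eigenvector of the up-Laplacian `δ₁ᵀ δ₁` for a positive eigenvalue is an antisymmetric function
on oriented edges whose divergence vanishes at every vertex. On the block `𝒯_{c,b}`, whose core is
a `c`-clique, this collapses the eigenvalue equation: on an edge inside the core it reads
`μ w = (c + b) w` and, if `w` vanishes on the core, it reads `μ w = c w` on the remaining edges.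
Hence the positive eigenvalues of `𝒯_{c,b}` lie in `{c, c + b}`. A vertex-disjoint union keeps any
lower bound on the positive eigenvalues shared by its parts, and one block with each of the core
sizes `c`, `c + 1`, `c + 2` produces every number `t ≥ 3c³` of triangles: adding pendant vertices
adds multiples of `c.choose 2`, `(c + 1).choose 2` and `(c + 2).choose 2`, whose combinations
represent every large enough integer.

Conversely, let `𝒯` have `t` triangles and `e` edges. The trace of `δ₁ᵀ δ₁` is `3t`, and its rank
is at least `e / 3` because each row of `δ₁` meets three columns and no column vanishes; as
`λ · rank ≤ trace`, this gives `λ e ≤ 9t`. A vertex of degree `d` lies in at most `min(e, d²)`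
triangles, and summing over the vertices gives `t² ≤ e³`, so `λ³ ≤ 729t`.
-/

open Finset Matrix

/-- The sign `[T : e]` of an edge `e` in a triangle `T`. -/
noncomputable def triSign (T e : Finset ℕ) : ℝ :=
  if e ⊆ T ∧ e.card = 2 ∧ T.card = 3 then
    if (T \ e).max = T.max ∨ (T \ e).min = T.min then 1 else -1
  else 0

/-- A triangle family: a nonempty finite set of 3-element subsets of ℕ. -/
def IsTriFam (F : Finset (Finset ℕ)) : Prop :=
  F.Nonempty ∧ ∀ T ∈ F, T.card = 3

/-- The edges of the support graph of a triangle family. -/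
def edgesOf (F : Finset (Finset ℕ)) : Finset (Finset ℕ) :=
  F.biUnion fun T => T.powersetCard 2

/-- The vertices of the support graph of a triangle family. -/
def vertsOf (F : Finset (Finset ℕ)) : Finset ℕ :=
  F.biUnion id

/-- The signed edge-triangle incidence matrix of a triangle family. -/
noncomputable def delta1 (F : Finset (Finset ℕ)) :
    Matrix {T // T ∈ F} {e // e ∈ edgesOf F} ℝ :=
  Matrix.of fun T e => triSign T.1 e.1

/-- The smallest positive eigenvalue of a matrix. -/
noncomputable def lambdaMinPos {m : Type*} [Fintype m] (M : Matrix m m ℝ) : ℝ :=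
  sInf {μ : ℝ | 0 < μ ∧ ∃ v : m → ℝ, v ≠ 0 ∧ M.mulVec v = μ • v}

/-- `λ(𝒯)`: the smallest positive eigenvalue of `δ₁(𝒯)ᵀ δ₁(𝒯)`. -/
noncomputable def lam (F : Finset (Finset ℕ)) : ℝ :=
  lambdaMinPos ((delta1 F)ᵀ * delta1 F)

/-- The neighborhood of `x` in the support graph `Γ₀(F)`. -/
def nbrs (F : Finset (Finset ℕ)) (x : ℕ) : Finset ℕ :=
  (vertsOf F).filter fun y => x ≠ y ∧ ∃ T ∈ F, x ∈ T ∧ y ∈ T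

/-- `φ(t)`: the maximum of `λ(𝒯)` over triangle families with `|𝒯| = t`. -/
noncomputable def phi (t : ℕ) : ℝ :=
  sSup {r : ℝ | ∃ F : Finset (Finset ℕ), IsTriFam F ∧ F.card = t ∧ lam F = r}

/-- `Λ(t) = max_{1 ≤ s ≤ t} φ(s)`. -/
noncomputable def Lam (t : ℕ) : ℝ :=
  sSup {r : ℝ | ∃ s : ℕ, 1 ≤ s ∧ s ≤ t ∧ phi s = r}

/-- `H(n) = min{ s ≥ 1 : φ(C(n,3)+s) > n - 1 }`. -/
noncomputable def Hfun (n : ℕ) : ℕ :=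
  sInf {s : ℕ | 1 ≤ s ∧ (n : ℝ) - 1 < phi (n.choose 3 + s)}

/-- The triangle family `𝒯_{c,b}`: all 3-cliques of `K_c ∨ (b isolated vertices)`. -/
def Tcb (c b : ℕ) : Finset (Finset ℕ) :=
  ((Finset.Icc 1 c).powersetCard 3) ∪
    (Finset.Icc (c+1) (c+b)).biUnion
      (fun i => ((Finset.Icc 1 c).powersetCard 2).image (fun p => insert i p))

section LinearAlgebra

variable {m n : Type*} [Fintype n] {M : Matrix n n ℝ}

lemma lambdaMinPos_nonneg : 0 ≤ lambdaMinPos M :=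
  Real.sInf_nonneg fun _ h => h.1.le

lemma lambdaMinPos_le {μ : ℝ} {v : n → ℝ} (hμ : 0 < μ) (hv : v ≠ 0)
    (h : M *ᵥ v = μ • v) : lambdaMinPos M ≤ μ :=
  csInf_le ⟨0, fun _ h => h.1.le⟩ ⟨hμ, v, hv, h⟩

lemma eigenvectorBasis_ne_zero [DecidableEq n] (hM : M.IsHermitian) (i : n) :
    (hM.eigenvectorBasis i).ofLp ≠ 0 := fun h =>
  hM.eigenvectorBasis.orthonormal.ne_zero i (WithLp.ofLp_injective 2 h)

lemma le_lambdaMinPos (hM : M.PosSemidef) (hM₀ : M ≠ 0) {c : ℝ}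
    (h : ∀ μ : ℝ, 0 < μ → ∀ v : n → ℝ, v ≠ 0 → M *ᵥ v = μ • v → c ≤ μ) :
    c ≤ lambdaMinPos M := by
  classical
  obtain ⟨i, hi⟩ : ∃ i, hM.1.eigenvalues i ≠ 0 :=
    Function.ne_iff.mp (mt hM.1.eigenvalues_eq_zero_iff.mp hM₀)
  refine le_csInf ⟨_, (hM.eigenvalues_nonneg i).lt_of_ne' hi, _,
    eigenvectorBasis_ne_zero hM.1 i, hM.1.mulVec_eigenvectorBasis i⟩ ?_
  rintro μ ⟨hμ, v, hv, hMv⟩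
  exact h μ hμ v hv hMv

lemma lambdaMinPos_mul_rank_le_trace (hM : M.PosSemidef) : lambdaMinPos M * M.rank ≤ M.trace := by
  classical
  calc lambdaMinPos M * M.rank
      = #{i | hM.1.eigenvalues i ≠ 0} • lambdaMinPos M := by
        rw [hM.1.rank_eq_card_non_zero_eigs, Fintype.card_subtype, nsmul_eq_mul, mul_comm]
    _ ≤ ∑ i with hM.1.eigenvalues i ≠ 0, hM.1.eigenvalues i :=
        card_nsmul_le_sum _ _ _ fun i hi => lambdaMinPos_le
          ((hM.eigenvalues_nonneg i).lt_of_ne' (mem_filter.mp hi).2)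
          (eigenvectorBasis_ne_zero hM.1 i) (hM.1.mulVec_eigenvectorBasis i)
    _ = M.trace := by
        rw [sum_filter_ne_zero, hM.1.trace_eq_sum_eigenvalues]
        rfl

lemma card_le_mul_rank_of_card_row_support_le {K : Type*} [Field K] [DecidableEq K] [Finite m]
    (A : Matrix m n K) {k : ℕ} (hrow : ∀ i, #{j | A i j ≠ 0} ≤ k)
    (hcol : ∀ j, ∃ i, A i j ≠ 0) : Fintype.card n ≤ k * A.rank := by
  classical
  obtain ⟨b, hb, hspan, hli⟩ := exists_linearIndependent K (Set.range A.row)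
  have : Fintype b := ((Set.finite_range A.row).subset hb).fintype
  have hrank : #b.toFinset = A.rank := by
    rw [A.rank_eq_finrank_span_row, ← hspan, finrank_span_set_eq_card hli]
  -- A column vanishing on a row basis vanishes on every row.
  have hcover : (univ : Finset n) ⊆ b.toFinset.biUnion fun r => {j | r j ≠ 0} := by
    intro j _
    by_contra hj
    have hzero : ∀ r ∈ b, r j = 0 := by simpa using hj
    have hker : Submodule.span K b ≤ LinearMap.ker (LinearMap.proj (φ := fun _ : n => K) j) :=
      Submodule.span_le.mpr hzero
    obtain ⟨i, hi⟩ := hcol j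
    exact hi (hker (hspan ▸ Submodule.subset_span ⟨i, rfl⟩))
  calc Fintype.card n ≤ #(b.toFinset.biUnion fun r => {j | r j ≠ 0}) := card_le_card hcover
    _ ≤ #b.toFinset * k := card_biUnion_le_card_mul _ _ _ fun r hr => by
        obtain ⟨i, rfl⟩ := hb (Set.mem_toFinset.mp hr)
        exact hrow i
    _ = k * A.rank := by rw [hrank, mul_comm]

end LinearAlgebra

section FiniteSets

lemma exists_card_eq_disjoint {α : Type*} [Infinite α] (n : ℕ) (S : Finset α) :
    ∃ U : Finset α, #U = n ∧ Disjoint U S := by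
  obtain ⟨U, hU, hcard⟩ := S.finite_toSet.infinite_compl.exists_subset_card_eq n
  exact ⟨U, hcard, disjoint_left.mpr fun _ hx => hU hx⟩

variable {α : Type*} [DecidableEq α]

lemma pair_subset_triple (x y z : α) : ({x, y} : Finset α) ⊆ {x, y, z} := by
  simp [insert_subset_iff]

lemma exists_triple_eq_of_pair_subset {T : Finset α} (hT : #T = 3) {x y : α} (hxy : x ≠ y)
    (h : {x, y} ⊆ T) : ∃ z, x ≠ z ∧ y ≠ z ∧ T = {x, y, z} := by
  obtain ⟨z, hz⟩ : ∃ z, T \ {x, y} = {z} := by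
    rw [← card_eq_one, card_sdiff_of_subset h, hT, card_pair hxy]
  have hzT : z ∈ T \ {x, y} := hz ▸ mem_singleton_self z
  refine ⟨z, by grind, by grind, ?_⟩
  rw [← union_sdiff_of_subset h, hz, insert_union, singleton_union]

lemma exists_triple_eq_of_mem {T : Finset α} (hT : #T = 3) {x : α} (hx : x ∈ T) :
    ∃ y z, x ≠ y ∧ x ≠ z ∧ y ≠ z ∧ T = {x, y, z} := by
  obtain ⟨y, hy, hyx⟩ := exists_mem_ne (hT.symm ▸ by norm_num : 1 < #T) x
  obtain ⟨z, hxz, hyz, rfl⟩ := exists_triple_eq_of_pair_subset hT hyx.symm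
    (insert_subset hx (singleton_subset_iff.mpr hy))
  exact ⟨y, z, hyx.symm, hxz, hyz, rfl⟩

lemma sum_powersetCard_two_triple {M : Type*} [AddCommMonoid M] {x y z : α} (hxy : x ≠ y)
    (hxz : x ≠ z) (hyz : y ≠ z) (f : Finset α → M) :
    ∑ e ∈ ({x, y, z} : Finset α).powersetCard 2, f e = f {x, y} + f {y, z} + f {z, x} := by
  have h₁ : ({x, y} : Finset α) ≠ {y, z} := ne_of_mem_of_not_mem' (a := x) (by simp) (by simp [*])
  have h₂ : ({y, z} : Finset α) ≠ {z, x} :=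
    ne_of_mem_of_not_mem' (a := y) (by simp) (by simp [*, hxy.symm])
  have h₃ : ({x, y} : Finset α) ≠ {z, x} :=
    ne_of_mem_of_not_mem' (a := y) (by simp) (by simp [*, hxy.symm])
  have hedges : ({x, y, z} : Finset α).powersetCard 2 = {{x, y}, {y, z}, {z, x}} := by
    refine (eq_of_subset_of_card_le (by grind) ?_).symm
    rw [card_powersetCard, card_eq_three.mpr ⟨x, y, z, hxy, hxz, hyz, rfl⟩]
    exact (card_eq_three.mpr ⟨_, _, _, h₁, h₃, h₂, rfl⟩).ge
  rw [hedges, sum_insert (by simp [h₁, h₃]), sum_insert (by simpa using h₂), sum_singleton,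
    add_assoc]

lemma sum_card_filter_mem {V : Finset α} {𝒜 : Finset (Finset α)} {k : ℕ}
    (hV : ∀ A ∈ 𝒜, A ⊆ V) (hk : ∀ A ∈ 𝒜, #A = k) : ∑ x ∈ V, #{A ∈ 𝒜 | x ∈ A} = k * #𝒜 :=
  calc ∑ x ∈ V, #{A ∈ 𝒜 | x ∈ A} = ∑ A ∈ 𝒜, #{x ∈ V | x ∈ A} :=
        sum_card_bipartiteAbove_eq_sum_card_bipartiteBelow (· ∈ ·)
    _ = ∑ _A ∈ 𝒜, k := sum_congr rfl fun A hA => by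
        rw [filter_mem_eq_inter, inter_eq_right.mpr (hV A hA), hk A hA]
    _ = k * #𝒜 := by rw [sum_const, smul_eq_mul, mul_comm]

end FiniteSets

section Arithmetic

lemma exists_modEq_mul_of_coprime {a q : ℕ} (haq : a.Coprime q) (hq : 0 < q) (n : ℕ) :
    ∃ y < q, y * a ≡ n [MOD q] := by
  obtain ⟨y, hy, h⟩ := Nat.exists_mul_mod_eq_of_coprime n haq hq.ne'
  exact ⟨y, hy, mul_comm a y ▸ h⟩

lemma choose_two_succ (n : ℕ) : (n + 1).choose 2 = n.choose 2 + n := by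
  rw [Nat.choose_succ_succ', Nat.choose_one_right, add_comm]

lemma two_mul_choose_two_add (n : ℕ) : 2 * n.choose 2 + n = n ^ 2 := by
  induction n with
  | zero => rfl
  | succ n ih => rw [choose_two_succ]; linear_combination ih

lemma two_mul_sum_choose_three (n : ℕ) :
    2 * (n.choose 3 + (n + 1).choose 3 + (n + 2).choose 3) = n ^ 3 + n := by
  induction n with
  | zero => rfl
  | succ n ih =>
    have hstep (k : ℕ) : (k + 1).choose 3 = k.choose 2 + k.choose 3 := Nat.choose_succ_succ' k 2
    rw [hstep (n + 2), hstep (n + 1), hstep n] at *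
    rw [choose_two_succ (n + 1), choose_two_succ n] at *
    linear_combination ih + 3 * two_mul_choose_two_add n

lemma exists_gcd_decomposition_choose_two {c : ℕ} (hc : 2 ≤ c) : ∃ g a b : ℕ,
    0 < g ∧ 0 < b ∧ c = a * g ∧ c.choose 2 = b * g ∧ a.Coprime b ∧ a ≤ 2 := by
  obtain ⟨g, a, b, hg, hab, ha, hb⟩ :=
    Nat.exists_coprime' (Nat.gcd_pos_of_pos_left (c.choose 2) (by lia : 0 < c))
  have hb₀ : 0 < b := Nat.pos_of_mul_pos_right (hb ▸ Nat.choose_pos hc)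
  have hdvd : a ∣ 2 * b := by
    refine (Nat.dvd_add_left (dvd_refl a)).mp ⟨c, Nat.eq_of_mul_eq_mul_right hg ?_⟩
    linear_combination two_mul_choose_two_add c - 2 * hb - ha + c * ha
  exact ⟨g, a, b, hg, hb₀, ha, hb, hab, Nat.le_of_dvd two_pos (hab.dvd_of_dvd_mul_right hdvd)⟩

-- With `g` the greatest common divisor of `c` and `c.choose 2`, the term `2 * c + 1` is prime to
-- `g` and corrects `R` modulo `g`; the term `c` then corrects the quotient modulo `c.choose 2 / g`.
lemma exists_linear_combination_choose_two {c R : ℕ} (hc : 3 ≤ c) (hR : 2 * c ^ 3 ≤ R) :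
    ∃ k y z, y < c ∧ z < c ∧ R = k * c.choose 2 + y * c + z * (2 * c + 1) := by
  obtain ⟨g, a, b, hg, hb₀, ha, hb, hab, ha₂⟩ :=
    exists_gcd_decomposition_choose_two (by lia : 2 ≤ c)
  have hbc : b < c := by
    have : 2 * b + a = a * c := Nat.eq_of_mul_eq_mul_right hg
      (by linear_combination two_mul_choose_two_add c - 2 * hb - ha + c * ha)
    nlinarith
  have hgc : g ≤ c := Nat.le_of_dvd (by lia) ⟨a, by rw [ha, mul_comm]⟩
  have hcop : (2 * c + 1).Coprime g := by rw [ha, ← mul_assoc]; simp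
  obtain ⟨z, hz, hzR⟩ := exists_modEq_mul_of_coprime hcop hg R
  have hzc : z < c := hz.trans_le hgc
  have hsize : z * (2 * c + 1) + c * c ≤ R := by
    have : 3 * c ^ 2 ≤ c * c ^ 2 := Nat.mul_le_mul_right _ hc
    nlinarith
  obtain ⟨S, hS⟩ : ∃ S, R = z * (2 * c + 1) + g * S :=
    (Nat.modEq_iff_exists_eq_add (by lia)).mp hzR
  obtain ⟨y, hy, hyS⟩ := exists_modEq_mul_of_coprime hab hb₀ S
  have hyc : y < c := hy.trans hbc
  have hya : g * (y * a) = y * c := by rw [ha]; ring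
  obtain ⟨k, hk⟩ : ∃ k, S = y * a + b * k := by
    refine (Nat.modEq_iff_exists_eq_add (Nat.le_of_mul_le_mul_left ?_ hg)).mp hyS
    calc g * (y * a) = y * c := hya
      _ ≤ c * c := Nat.mul_le_mul_right c hyc.le
      _ ≤ g * S := by lia
  exact ⟨k, y, z, hyc, hzc, by rw [hS, hk, hb, ← hya]; ring⟩

lemma exists_choose_two_combination {c R : ℕ} (hc : 3 ≤ c) (hR : 2 * c ^ 3 ≤ R) : ∃ x y z,
    R = x * c.choose 2 + y * (c + 1).choose 2 + z * (c + 2).choose 2 := by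
  obtain ⟨k, y, z, hy, hz, hk⟩ := exists_linear_combination_choose_two hc hR
  obtain ⟨x, rfl⟩ : ∃ x, k = x + (y + z) := by
    refine Nat.exists_eq_add_of_le' (not_lt.mp fun hlt => ?_)
    have hcc := two_mul_choose_two_add c
    have hmul : (k + 1) * c.choose 2 ≤ (y + z) * c.choose 2 := Nat.mul_le_mul_right _ hlt
    nlinarith
  refine ⟨x, y, z, ?_⟩
  rw [choose_two_succ (c + 1), choose_two_succ c, hk]
  ring

lemma exists_eq_add_three_blocks {c t : ℕ} (hc : 3 ≤ c) (ht : 3 * c ^ 3 ≤ t) : ∃ x y z,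
    t = (c.choose 3 + x * c.choose 2) + ((c + 1).choose 3 + y * (c + 1).choose 2) +
      ((c + 2).choose 3 + z * (c + 2).choose 2) := by
  have hle : c.choose 3 + (c + 1).choose 3 + (c + 2).choose 3 ≤ c ^ 3 := by
    linarith [two_mul_sum_choose_three c, Nat.le_self_pow three_ne_zero c]
  obtain ⟨R, rfl⟩ := Nat.exists_eq_add_of_le (by lia :
    c.choose 3 + (c + 1).choose 3 + (c + 2).choose 3 ≤ t)
  obtain ⟨x, y, z, rfl⟩ := exists_choose_two_combination hc (by lia : 2 * c ^ 3 ≤ R)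
  exact ⟨x, y, z, by ring⟩

lemma rpow_one_third_pow_three {a : ℝ} (ha : 0 ≤ a) : (a ^ ((1 : ℝ) / 3)) ^ 3 = a := by
  rw [one_div]
  exact_mod_cast Real.rpow_inv_natCast_pow ha three_ne_zero

lemma three_le_rpow_one_third {a : ℝ} (ha : 27 ≤ a) : 3 ≤ a ^ ((1 : ℝ) / 3) := by
  have ha₀ : 0 ≤ a := by linarith
  refine le_of_pow_le_pow_left₀ three_ne_zero (by positivity) ?_
  rw [rpow_one_third_pow_three ha₀]
  linarith

end Arithmetic

section Cochains

/-- The value on the oriented triangle `(x, y, z)` of the coboundary of the 1-cochain `w`. -/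
def coboundary {α : Type*} (w : α → α → ℝ) (x y z : α) : ℝ :=
  w x y + w y z + w z x

variable {F G : Finset (Finset ℕ)} {w : ℕ → ℕ → ℝ} {c μ : ℝ} {x y z : ℕ}

lemma mem_edgesOf {e : Finset ℕ} : e ∈ edgesOf F ↔ ∃ T ∈ F, e ⊆ T ∧ #e = 2 := by
  simp only [edgesOf, mem_biUnion, mem_powersetCard]

lemma mem_vertsOf : x ∈ vertsOf F ↔ ∃ T ∈ F, x ∈ T := by
  simp only [vertsOf, mem_biUnion, id]

/-- The link of the pair `{x, y}` in `F`: the vertices which complete it to a triangle of `F`. -/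
def link (F : Finset (Finset ℕ)) (x y : ℕ) : Finset ℕ :=
  {z ∈ vertsOf F | x ≠ z ∧ y ≠ z ∧ {x, y, z} ∈ F}

lemma mem_link : z ∈ link F x y ↔ x ≠ z ∧ y ≠ z ∧ {x, y, z} ∈ F := by
  rw [link, mem_filter, and_iff_right_iff_imp]
  rintro ⟨-, -, h⟩
  exact mem_vertsOf.mpr ⟨_, h, by simp⟩

lemma mem_edgesOf_of_mem_link (hxy : x ≠ y) (hz : z ∈ link F x y) : {x, y} ∈ edgesOf F :=
  mem_edgesOf.mpr ⟨_, (mem_link.mp hz).2.2, pair_subset_triple x y z, card_pair hxy⟩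

lemma mem_nbrs : y ∈ nbrs F x ↔ x ≠ y ∧ {x, y} ∈ edgesOf F := by
  rw [nbrs, mem_filter, mem_vertsOf, mem_edgesOf]
  constructor
  · rintro ⟨-, hxy, T, hT, hx, hy⟩
    exact ⟨hxy, T, hT, insert_subset hx (singleton_subset_iff.mpr hy), card_pair hxy⟩
  · rintro ⟨hxy, T, hT, hsub, -⟩
    have hx : x ∈ T := hsub (mem_insert_self x _)
    have hy : y ∈ T := hsub (mem_insert_of_mem (mem_singleton_self y))
    exact ⟨⟨T, hT, hy⟩, hxy, T, hT, hx, hy⟩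

lemma mem_nbrs_and_mem_link :
    y ∈ nbrs F x ∧ z ∈ link F x y ↔ x ≠ y ∧ x ≠ z ∧ y ≠ z ∧ {x, y, z} ∈ F := by
  constructor
  · rintro ⟨hy, hz⟩
    exact ⟨(mem_nbrs.mp hy).1, mem_link.mp hz⟩
  · rintro ⟨hxy, h⟩
    have hz : z ∈ link F x y := mem_link.mpr h
    exact ⟨mem_nbrs.mpr ⟨hxy, mem_edgesOf_of_mem_link hxy hz⟩, hz⟩

/-- `w` is an eigenvector, for the eigenvalue `μ`, of the up-Laplacian `δ₁(F)ᵀ δ₁(F)`, encoded as an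
antisymmetric function on ordered pairs; its values on pairs which are not edges are irrelevant. -/
structure IsEigencochain (F : Finset (Finset ℕ)) (μ : ℝ) (w : ℕ → ℕ → ℝ) : Prop where
  antisymm : ∀ x y, w y x = -w x y
  sum_link : ∀ x y, x ≠ y → {x, y} ∈ edgesOf F → ∑ z ∈ link F x y, coboundary w x y z = μ * w x y
  exists_ne_zero : ∃ x y, x ≠ y ∧ {x, y} ∈ edgesOf F ∧ w x y ≠ 0

/-- Every positive eigenvalue of the up-Laplacian of `F` is at least `c`. -/
def HasSpectralGap (c : ℝ) (F : Finset (Finset ℕ)) : Prop :=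
  ∀ μ > 0, ∀ w, IsEigencochain F μ w → c ≤ μ

lemma HasSpectralGap.mono {c' : ℝ} (hF : HasSpectralGap c F) (hc : c' ≤ c) :
    HasSpectralGap c' F := fun μ hμ w hw => hc.trans (hF μ hμ w hw)

lemma coboundary_swap (hw : ∀ x y, w y x = -w x y) :
    coboundary w x y z = -coboundary w x z y := by
  rw [coboundary, coboundary, hw x y, hw z y, hw x z]
  ring

lemma IsEigencochain.self_eq_zero (hw : IsEigencochain F μ w) (x : ℕ) : w x x = 0 :=
  self_eq_neg.mp (hw.antisymm x x)

lemma IsEigencochain.coboundary_left (hw : IsEigencochain F μ w) (x y : ℕ) :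
    coboundary w x y x = 0 := by
  rw [coboundary, hw.self_eq_zero x, hw.antisymm x y]
  ring

lemma IsEigencochain.coboundary_right (hw : IsEigencochain F μ w) (x y : ℕ) :
    coboundary w x y y = 0 := by
  rw [coboundary, hw.self_eq_zero y, hw.antisymm x y]
  ring

lemma IsEigencochain.sum_coboundary (hw : IsEigencochain F μ w) (S : Finset ℕ) (x y : ℕ) :
    ∑ z ∈ S, coboundary w x y z = #S * w x y + ∑ z ∈ S, w y z - ∑ z ∈ S, w x z := by
  simp only [coboundary, hw.antisymm x, sum_add_distrib, sum_const, nsmul_eq_mul, sum_neg_distrib]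
  ring

/-- The equation `∂₁ ∂₂ = 0`: each triangle `{x, y, z}` contributes to the divergence at `x` through
both `(x, y)` and `(x, z)`, with opposite signs. -/
lemma IsEigencochain.sum_nbrs_eq_zero (hw : IsEigencochain F μ w) (hμ : μ ≠ 0) (x : ℕ) :
    ∑ y ∈ nbrs F x, w x y = 0 := by
  have hcomm : ∑ y ∈ nbrs F x, ∑ z ∈ link F x y, coboundary w x y z =
      ∑ z ∈ nbrs F x, ∑ y ∈ link F x z, coboundary w x y z := by
    refine sum_comm' fun y z => ?_
    rw [and_comm (a := y ∈ link F x z), mem_nbrs_and_mem_link, mem_nbrs_and_mem_link, pair_comm y z,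
      ne_comm (a := y)]
    tauto
  have hdiv : ∑ y ∈ nbrs F x, ∑ z ∈ link F x y, coboundary w x y z = μ * ∑ y ∈ nbrs F x, w x y := by
    rw [mul_sum]
    exact sum_congr rfl fun y hy => hw.sum_link x y (mem_nbrs.mp hy).1 (mem_nbrs.mp hy).2
  have hneg : μ * ∑ y ∈ nbrs F x, w x y = -(μ * ∑ y ∈ nbrs F x, w x y) := by
    rw [← hdiv]
    nth_rw 1 [hcomm]
    simp only [← sum_neg_distrib, ← coboundary_swap hw.antisymm]
  exact (mul_eq_zero.mp (self_eq_neg.mp hneg)).resolve_left hμ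

lemma edgesOf_union : edgesOf (F ∪ G) = edgesOf F ∪ edgesOf G :=
  union_biUnion

lemma link_union (hd : Disjoint (edgesOf F) (edgesOf G)) (hxy : x ≠ y)
    (he : {x, y} ∈ edgesOf F) : link (F ∪ G) x y = link F x y := by
  ext z
  have hG : {x, y, z} ∉ G := fun h => disjoint_left.mp hd he
    (mem_edgesOf.mpr ⟨_, h, pair_subset_triple x y z, card_pair hxy⟩)
  simp only [mem_link, mem_union, hG, or_false]

lemma HasSpectralGap.union (hF : HasSpectralGap c F) (hG : HasSpectralGap c G)
    (hd : Disjoint (edgesOf F) (edgesOf G)) : HasSpectralGap c (F ∪ G) := by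
  intro μ hμ w hw
  obtain ⟨x, y, hxy, he, hne⟩ := hw.exists_ne_zero
  rcases mem_union.mp (edgesOf_union ▸ he) with he | he
  · refine hF μ hμ w ⟨hw.antisymm, fun a b hab hab' => ?_, x, y, hxy, he, hne⟩
    rw [← link_union hd hab hab']
    exact hw.sum_link a b hab (edgesOf_union ▸ mem_union_left _ hab')
  · refine hG μ hμ w ⟨hw.antisymm, fun a b hab hab' => ?_, x, y, hxy, he, hne⟩
    rw [← link_union hd.symm hab hab', union_comm]
    exact hw.sum_link a b hab (edgesOf_union ▸ mem_union_right _ hab')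

end Cochains

section JoinCliques

variable {C B : Finset ℕ} {w : ℕ → ℕ → ℝ} {μ : ℝ} {x y i : ℕ}

/-- The block on the core `C` with pendant vertices `B`: the triangles of the join of the complete
graph on `C` with the empty graph on `B`. With consecutive intervals for `C` and `B` this is the
family `Tcb`. -/
def joinCliques (C B : Finset ℕ) : Finset (Finset ℕ) :=
  C.powersetCard 3 ∪ B.biUnion fun i => (C.powersetCard 2).image (insert i)

lemma mem_joinCliques (hd : Disjoint C B) {T : Finset ℕ} :
    T ∈ joinCliques C B ↔ #T = 3 ∧ ∃ i ∈ C ∪ B, T ⊆ insert i C := by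
  simp only [joinCliques, mem_union, mem_powersetCard, mem_biUnion, mem_image]
  constructor
  · rintro (⟨hTC, hT⟩ | ⟨i, hi, p, ⟨hpC, hp⟩, rfl⟩)
    · obtain ⟨i, hi⟩ : T.Nonempty := card_pos.mp (by lia)
      exact ⟨hT, i, Or.inl (hTC hi), hTC.trans (subset_insert i C)⟩
    · have hip : i ∉ p := fun h => disjoint_left.mp hd (hpC h) hi
      exact ⟨by rw [card_insert_of_notMem hip, hp], i, Or.inr hi, insert_subset_insert i hpC⟩
  · rintro ⟨hT, i, hi, hTi⟩
    by_cases hiT : i ∈ T \ C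
    · obtain ⟨hiT, hiC⟩ := mem_sdiff.mp hiT
      refine Or.inr ⟨i, hi.resolve_left hiC, T.erase i, ⟨?_, ?_⟩, insert_erase hiT⟩
      · rwa [← subset_insert_iff]
      · rw [card_erase_of_mem hiT, hT]
    · refine Or.inl ⟨fun z hz => ?_, hT⟩
      rcases mem_insert.mp (hTi hz) with rfl | hzC
      · exact not_not.mp fun hzC => hiT (mem_sdiff.mpr ⟨hz, hzC⟩)
      · exact hzC

lemma card_joinCliques (hd : Disjoint C B) :
    #(joinCliques C B) = (#C).choose 3 + #B * (#C).choose 2 := by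
  have hnot : ∀ i ∈ B, ∀ p ∈ C.powersetCard 2, i ∉ p := fun i hi p hp h =>
    disjoint_left.mp hd ((mem_powersetCard.mp hp).1 h) hi
  have himage : ∀ i ∈ B, #((C.powersetCard 2).image (insert i)) = (#C).choose 2 := by
    intro i hi
    rw [card_image_of_injOn, card_powersetCard]
    intro p hp q hq hpq
    rw [← erase_insert (hnot i hi p hp), hpq, erase_insert (hnot i hi q hq)]
  rw [joinCliques, card_union_of_disjoint, card_powersetCard, card_biUnion,
    sum_const_nat himage]
  · intro i hi j _ hij
    simp only [Function.onFun, disjoint_left, mem_image]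
    rintro _ ⟨p, _, rfl⟩ ⟨q, hq, hqp⟩
    have : i ∈ insert j q := hqp ▸ mem_insert_self i p
    exact (mem_insert.mp this).elim hij (hnot i hi q hq)
  · simp only [disjoint_left, mem_biUnion, mem_image]
    rintro _ hT ⟨i, hi, p, _, rfl⟩
    exact disjoint_left.mp hd ((mem_powersetCard.mp hT).1 (mem_insert_self i p)) hi

lemma vertsOf_joinCliques_subset (hd : Disjoint C B) : vertsOf (joinCliques C B) ⊆ C ∪ B := by
  refine biUnion_subset.mpr fun T hT => ?_
  obtain ⟨-, i, hi, hTi⟩ := (mem_joinCliques hd).mp hT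
  exact hTi.trans (insert_subset hi subset_union_left)

lemma triple_mem_joinCliques (hd : Disjoint C B) {z : ℕ} (hx : x ∈ C) (hz : z ∈ C)
    (hxy : x ≠ y) (hxz : x ≠ z) (hyz : y ≠ z) :
    {x, y, z} ∈ joinCliques C B ↔ y ∈ C ∪ B := by
  rw [mem_joinCliques hd]
  constructor
  · rintro ⟨-, i, hi, hsub⟩
    exact insert_subset hi subset_union_left (hsub (by simp))
  · exact fun hy => ⟨card_eq_three.mpr ⟨x, y, z, hxy, hxz, hyz, rfl⟩, y, hy, by grind⟩

lemma pair_mem_edgesOf_joinCliques (hd : Disjoint C B) (hC : 3 ≤ #C) (hxy : x ≠ y) :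
    {x, y} ∈ edgesOf (joinCliques C B) ↔ x ∈ C ∧ y ∈ C ∪ B ∨ y ∈ C ∧ x ∈ C ∪ B := by
  have hedge {x y : ℕ} (hxy : x ≠ y) (hx : x ∈ C) (hy : y ∈ C ∪ B) :
      {x, y} ∈ edgesOf (joinCliques C B) := by
    obtain ⟨z, hz, hzx, hzy⟩ : ∃ z ∈ C, z ≠ x ∧ z ≠ y := by
      obtain ⟨z, hz, hne⟩ := exists_mem_notMem_of_card_lt_card
        (card_le_two.trans_lt hC : #{x, y} < #C)
      exact ⟨z, hz, by simpa using hne⟩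
    exact mem_edgesOf.mpr ⟨_, (triple_mem_joinCliques hd hx hz hxy hzx.symm hzy.symm).mpr hy,
      pair_subset_triple x y z, card_pair hxy⟩
  constructor
  · intro he
    obtain ⟨T, hT, hsub, -⟩ := mem_edgesOf.mp he
    obtain ⟨-, i, hi, hTi⟩ := (mem_joinCliques hd).mp hT
    have hx : x ∈ insert i C := hTi (hsub (by simp))
    have hy : y ∈ insert i C := hTi (hsub (by simp))
    grind
  · rintro (⟨hx, hy⟩ | ⟨hy, hx⟩)
    · exact hedge hxy hx hy
    · exact pair_comm y x ▸ hedge hxy.symm hy hx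

lemma nbrs_joinCliques_core (hd : Disjoint C B) (hC : 3 ≤ #C) (hx : x ∈ C) :
    nbrs (joinCliques C B) x = (C ∪ B).erase x := by
  ext y
  rw [mem_nbrs, mem_erase, ne_comm, and_congr_right fun hxy => ?_]
  rw [pair_mem_edgesOf_joinCliques hd hC hxy.symm]
  grind

lemma nbrs_joinCliques_pendant (hd : Disjoint C B) (hC : 3 ≤ #C) (hi : i ∈ B) :
    nbrs (joinCliques C B) i = C := by
  have hiC : i ∉ C := disjoint_right.mp hd hi
  ext y
  rw [mem_nbrs]
  constructor
  · rintro ⟨hiy, he⟩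
    rw [pair_mem_edgesOf_joinCliques hd hC hiy] at he
    grind
  · intro hy
    have hiy : i ≠ y := (ne_of_mem_of_not_mem hy hiC).symm
    exact ⟨hiy, (pair_mem_edgesOf_joinCliques hd hC hiy).mpr (Or.inr ⟨hy, mem_union_right C hi⟩)⟩

lemma link_joinCliques_core (hd : Disjoint C B) (hx : x ∈ C) (hy : y ∈ C) (hxy : x ≠ y) :
    link (joinCliques C B) x y = ((C ∪ B).erase x).erase y := by
  ext z
  rw [mem_link, mem_erase, mem_erase, pair_comm y z]
  constructor
  · rintro ⟨hxz, hyz, h⟩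
    exact ⟨hyz.symm, hxz.symm, (triple_mem_joinCliques hd hx hy hxz hxy hyz.symm).mp h⟩
  · rintro ⟨hzy, hzx, h⟩
    exact ⟨hzx.symm, hzy.symm, (triple_mem_joinCliques hd hx hy hzx.symm hxy hzy).mpr h⟩

lemma link_joinCliques_pendant (hd : Disjoint C B) (hx : x ∈ C) (hi : i ∈ B) :
    link (joinCliques C B) x i = C.erase x := by
  have hiC : i ∉ C := disjoint_right.mp hd hi
  ext z
  rw [mem_link, mem_erase]
  constructor
  · rintro ⟨hxz, hiz, h⟩
    obtain ⟨-, j, -, hsub⟩ := (mem_joinCliques hd).mp h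
    have hij : i ∈ insert j C := hsub (by simp)
    have hz : z ∈ insert j C := hsub (by simp)
    grind
  · rintro ⟨hzx, hz⟩
    have hxi : x ≠ i := ne_of_mem_of_not_mem hx hiC
    have hiz : i ≠ z := (ne_of_mem_of_not_mem hz hiC).symm
    exact ⟨hzx.symm, hiz,
      (triple_mem_joinCliques hd hx hz hxi hzx.symm hiz).mpr (mem_union_right C hi)⟩

lemma IsEigencochain.sum_core_eq_zero (hw : IsEigencochain (joinCliques C B) μ w)
    (hd : Disjoint C B) (hC : 3 ≤ #C) (hμ : μ ≠ 0) (hx : x ∈ C) : ∑ z ∈ C ∪ B, w x z = 0 := by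
  rw [← sum_erase _ (hw.self_eq_zero x), ← nbrs_joinCliques_core hd hC hx]
  exact hw.sum_nbrs_eq_zero hμ x

lemma IsEigencochain.sum_pendant_eq_zero (hw : IsEigencochain (joinCliques C B) μ w)
    (hd : Disjoint C B) (hC : 3 ≤ #C) (hμ : μ ≠ 0) (hi : i ∈ B) : ∑ z ∈ C, w i z = 0 := by
  rw [← nbrs_joinCliques_pendant hd hC hi]
  exact hw.sum_nbrs_eq_zero hμ i

lemma IsEigencochain.eq_of_core_ne_zero (hw : IsEigencochain (joinCliques C B) μ w)
    (hd : Disjoint C B) (hC : 3 ≤ #C) (hμ : μ ≠ 0) (hx : x ∈ C) (hy : y ∈ C) (hne : w x y ≠ 0) :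
    μ = #C + #B := by
  have hxy : x ≠ y := fun h => hne (h ▸ hw.self_eq_zero x)
  have he : {x, y} ∈ edgesOf (joinCliques C B) :=
    (pair_mem_edgesOf_joinCliques hd hC hxy).mpr (Or.inl ⟨hx, mem_union_left B hy⟩)
  have hsum := hw.sum_link x y hxy he
  rw [link_joinCliques_core hd hx hy hxy, sum_erase _ (hw.coboundary_right x y),
    sum_erase _ (hw.coboundary_left x y), hw.sum_coboundary, hw.sum_core_eq_zero hd hC hμ hx,
    hw.sum_core_eq_zero hd hC hμ hy, add_zero, sub_zero, card_union_of_disjoint hd] at hsum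
  exact_mod_cast (mul_right_cancel₀ hne hsum).symm

lemma IsEigencochain.eq_of_core_eq_zero (hw : IsEigencochain (joinCliques C B) μ w)
    (hd : Disjoint C B) (hC : 3 ≤ #C) (hμ : μ ≠ 0) (hzero : ∀ x ∈ C, ∀ y ∈ C, w x y = 0)
    (hx : x ∈ C) (hi : i ∈ B) (hne : w x i ≠ 0) : μ = #C := by
  have hxi : x ≠ i := ne_of_mem_of_not_mem hx (disjoint_right.mp hd hi)
  have he : {x, i} ∈ edgesOf (joinCliques C B) :=
    (pair_mem_edgesOf_joinCliques hd hC hxi).mpr (Or.inl ⟨hx, mem_union_right C hi⟩)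
  have hsum := hw.sum_link x i hxi he
  rw [link_joinCliques_pendant hd hx hi, sum_erase _ (hw.coboundary_left x i), hw.sum_coboundary,
    hw.sum_pendant_eq_zero hd hC hμ hi, sum_eq_zero (hzero x hx), add_zero, sub_zero] at hsum
  exact (mul_right_cancel₀ hne hsum).symm

lemma IsEigencochain.eigenvalue_joinCliques (hw : IsEigencochain (joinCliques C B) μ w)
    (hd : Disjoint C B) (hC : 3 ≤ #C) (hμ : μ ≠ 0) : μ = #C ∨ μ = #C + #B := by
  obtain ⟨x, y, hx, hy, hne⟩ : ∃ x y, x ∈ C ∧ y ∈ C ∪ B ∧ w x y ≠ 0 := by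
    obtain ⟨x, y, hxy, he, hne⟩ := hw.exists_ne_zero
    rcases (pair_mem_edgesOf_joinCliques hd hC hxy).mp he with ⟨hx, hy⟩ | ⟨hy, hx⟩
    · exact ⟨x, y, hx, hy, hne⟩
    · exact ⟨y, x, hy, hx, hw.antisymm x y ▸ neg_ne_zero.mpr hne⟩
  by_cases hzero : ∀ x ∈ C, ∀ y ∈ C, w x y = 0
  · have hyB : y ∈ B := (mem_union.mp hy).resolve_left fun hyC => hne (hzero x hx y hyC)
    exact Or.inl (hw.eq_of_core_eq_zero hd hC hμ hzero hx hyB hne)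
  · push Not at hzero
    obtain ⟨x, hx, y, hy, hne⟩ := hzero
    exact Or.inr (hw.eq_of_core_ne_zero hd hC hμ hx hy hne)

lemma hasSpectralGap_joinCliques (hd : Disjoint C B) (hC : 3 ≤ #C) :
    HasSpectralGap #C (joinCliques C B) := by
  intro μ hμ w hw
  rcases hw.eigenvalue_joinCliques hd hC hμ.ne' with rfl | rfl
  · exact le_rfl
  · exact le_add_of_nonneg_right (#B).cast_nonneg

end JoinCliques

section Realizability

variable {c n s t : ℕ}

/-- There are families of `t` triangles with spectral gap `c`, placed away from any prescribed
finite vertex set, so that realizations can be combined disjointly. -/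
def IsRealizable (c t : ℕ) : Prop :=
  ∀ S : Finset ℕ, ∃ F : Finset (Finset ℕ),
    IsTriFam F ∧ #F = t ∧ HasSpectralGap c F ∧ Disjoint (vertsOf F) S

lemma vertsOf_union {F G : Finset (Finset ℕ)} : vertsOf (F ∪ G) = vertsOf F ∪ vertsOf G :=
  union_biUnion

lemma IsTriFam.disjoint_of_disjoint_vertsOf {F G : Finset (Finset ℕ)} (hF : IsTriFam F)
    (hd : Disjoint (vertsOf F) (vertsOf G)) : Disjoint F G := by
  refine disjoint_left.mpr fun T hTF hTG => ?_
  obtain ⟨x, hx⟩ : T.Nonempty := card_pos.mp (by rw [hF.2 T hTF]; norm_num)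
  exact disjoint_left.mp hd (mem_vertsOf.mpr ⟨T, hTF, hx⟩) (mem_vertsOf.mpr ⟨T, hTG, hx⟩)

lemma disjoint_edgesOf_of_disjoint_vertsOf {F G : Finset (Finset ℕ)}
    (hd : Disjoint (vertsOf F) (vertsOf G)) : Disjoint (edgesOf F) (edgesOf G) := by
  refine disjoint_left.mpr fun e heF heG => ?_
  obtain ⟨T, hT, heT, he⟩ := mem_edgesOf.mp heF
  obtain ⟨U, hU, heU, -⟩ := mem_edgesOf.mp heG
  obtain ⟨x, hx⟩ : e.Nonempty := card_pos.mp (by rw [he]; norm_num)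
  exact disjoint_left.mp hd (mem_vertsOf.mpr ⟨T, hT, heT hx⟩) (mem_vertsOf.mpr ⟨U, hU, heU hx⟩)

lemma IsRealizable.add (hs : IsRealizable c s) (ht : IsRealizable c t) :
    IsRealizable c (s + t) := by
  intro S
  obtain ⟨F, hF, hFs, hFc, hFS⟩ := hs S
  obtain ⟨G, hG, hGt, hGc, hGS⟩ := ht (vertsOf F ∪ S)
  rw [disjoint_union_right] at hGS
  have hd : Disjoint (vertsOf F) (vertsOf G) := hGS.1.symm
  refine ⟨F ∪ G, ⟨hF.1.mono subset_union_left, fun T hT => ?_⟩, ?_,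
    hFc.union hGc (disjoint_edgesOf_of_disjoint_vertsOf hd), ?_⟩
  · exact (mem_union.mp hT).elim (hF.2 T) (hG.2 T)
  · rw [card_union_of_disjoint (hF.disjoint_of_disjoint_vertsOf hd), hFs, hGt]
  · rw [vertsOf_union, disjoint_union_left]
    exact ⟨hFS, hGS.2⟩

lemma isRealizable_block (hn : 3 ≤ n) (hc : c ≤ n) (b : ℕ) :
    IsRealizable c (n.choose 3 + b * n.choose 2) := by
  intro S
  obtain ⟨C, rfl, hCS⟩ := exists_card_eq_disjoint n S
  obtain ⟨B, rfl, hB⟩ := exists_card_eq_disjoint b (C ∪ S)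
  rw [disjoint_union_right] at hB
  have hd : Disjoint C B := hB.1.symm
  have hcard := card_joinCliques hd
  refine ⟨joinCliques C B, ⟨?_, fun T hT => ((mem_joinCliques hd).mp hT).1⟩, hcard,
    (hasSpectralGap_joinCliques hd hn).mono (Nat.cast_le.mpr hc), ?_⟩
  · exact card_pos.mp (hcard ▸ Nat.add_pos_left (Nat.choose_pos hn) _)
  · exact (disjoint_union_left.mpr ⟨hCS, hB.2⟩).mono_left (vertsOf_joinCliques_subset hd)

lemma isRealizable_of_three_mul_cube_le (hc : 3 ≤ c) (ht : 3 * c ^ 3 ≤ t) : IsRealizable c t := by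
  obtain ⟨x, y, z, rfl⟩ := exists_eq_add_three_blocks hc ht
  exact ((isRealizable_block hc le_rfl x).add
    (isRealizable_block (hc.trans (c.le_add_right 1)) (c.le_add_right 1) y)).add
    (isRealizable_block (hc.trans (c.le_add_right 2)) (c.le_add_right 2) z)

end Realizability

section Incidence

variable {F : Finset (Finset ℕ)} {T e : Finset ℕ} {x y z : ℕ} {c μ : ℝ}

lemma triSign_sq (hT : #T = 3) :
    triSign T e ^ 2 = if e ∈ T.powersetCard 2 then 1 else 0 := by
  simp only [triSign, mem_powersetCard, hT, and_true]
  split_ifs <;> norm_num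

lemma triSign_ne_zero_iff (hT : #T = 3) : triSign T e ≠ 0 ↔ e ∈ T.powersetCard 2 := by
  rw [← pow_ne_zero_iff two_ne_zero, triSign_sq hT, ite_ne_right_iff, and_iff_left one_ne_zero]

lemma powersetCard_two_subset_edgesOf (hT : T ∈ F) : T.powersetCard 2 ⊆ edgesOf F :=
  subset_biUnion_of_mem (fun T => T.powersetCard 2) hT

/-- The orientation of the pair `(x, y)` relative to the order of `ℕ`. -/
def orderSign (x y : ℕ) : ℝ :=
  if x < y then 1 else if y < x then -1 else 0

lemma orderSign_swap (x y : ℕ) : orderSign y x = -orderSign x y := by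
  unfold orderSign
  split_ifs <;> first | lia | norm_num

lemma orderSign_mul_self (hxy : x ≠ y) : orderSign x y * orderSign x y = 1 := by
  unfold orderSign
  split_ifs <;> first | lia | norm_num

/-- The orientation of the triangle `(x, y, z)` relative to the order of `ℕ`: the sign of the
permutation sorting the three vertices. -/
def cyclicSign (x y z : ℕ) : ℝ :=
  -(orderSign x y * orderSign y z * orderSign z x)

lemma cyclicSign_rotate (x y z : ℕ) : cyclicSign y z x = cyclicSign x y z := by
  unfold cyclicSign
  ring

lemma cyclicSign_mul_self (hxy : x ≠ y) (hxz : x ≠ z) (hyz : y ≠ z) :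
    cyclicSign x y z * cyclicSign x y z = 1 :=
  calc cyclicSign x y z * cyclicSign x y z
      = (orderSign x y * orderSign x y) * (orderSign y z * orderSign y z) *
          (orderSign z x * orderSign z x) := by unfold cyclicSign; ring
    _ = 1 := by
      rw [orderSign_mul_self hxy, orderSign_mul_self hyz, orderSign_mul_self hxz.symm]
      norm_num

lemma triSign_triple (hxy : x ≠ y) (hxz : x ≠ z) (hyz : y ≠ z) :
    triSign {x, y, z} {x, y} = cyclicSign x y z * orderSign x y := by
  have hT : #{x, y, z} = 3 := card_eq_three.mpr ⟨x, y, z, hxy, hxz, hyz, rfl⟩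
  have hdiff : ({x, y, z} : Finset ℕ) \ {x, y} = {z} := by grind
  have hmax : WithBot.some z = ({x, y, z} : Finset ℕ).max ↔ x < z ∧ y < z := by
    rw [max_insert, max_insert, max_singleton, ← WithBot.coe_max, ← WithBot.coe_max,
      WithBot.coe_inj]
    lia
  have hmin : WithTop.some z = ({x, y, z} : Finset ℕ).min ↔ z < x ∧ z < y := by
    rw [min_insert, min_insert, min_singleton, ← WithTop.coe_min, ← WithTop.coe_min,
      WithTop.coe_inj]
    lia
  rw [triSign, if_pos ⟨pair_subset_triple x y z, card_pair hxy, hT⟩, hdiff, max_singleton,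
    min_singleton]
  simp only [hmax, hmin, cyclicSign, orderSign]
  split_ifs <;> first | lia | norm_num

/-- The antisymmetric function on ordered pairs determined by a function `V` on edges, where each
edge is given its increasing orientation. -/
def cochainOf (V : Finset ℕ → ℝ) (x y : ℕ) : ℝ :=
  orderSign x y * V {x, y}

variable (V : Finset ℕ → ℝ)

lemma cochainOf_swap (x y : ℕ) : cochainOf V y x = -cochainOf V x y := by
  rw [cochainOf, cochainOf, orderSign_swap, pair_comm, neg_mul]

lemma sum_triSign_mul (hxy : x ≠ y) (hxz : x ≠ z) (hyz : y ≠ z) :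
    ∑ e ∈ ({x, y, z} : Finset ℕ).powersetCard 2, triSign {x, y, z} e * V e =
      cyclicSign x y z * coboundary (cochainOf V) x y z := by
  have hterm {a b c : ℕ} (hab : a ≠ b) (hac : a ≠ c) (hbc : b ≠ c) :
      triSign {a, b, c} {a, b} * V {a, b} = cyclicSign a b c * cochainOf V a b := by
    rw [triSign_triple hab hac hbc, cochainOf, mul_assoc]
  have hyzx : ({y, z, x} : Finset ℕ) = {x, y, z} := by grind
  have hzxy : ({z, x, y} : Finset ℕ) = {x, y, z} := by grind
  have hterm₂ := hterm hyz hxy.symm hxz.symm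
  have hterm₃ := hterm hxz.symm hyz.symm hxy
  rw [hyzx, cyclicSign_rotate] at hterm₂
  rw [hzxy, ← cyclicSign_rotate] at hterm₃
  rw [sum_powersetCard_two_triple hxy hxz hyz, hterm hxy hxz hyz, hterm₂, hterm₃, coboundary,
    mul_add, mul_add]

lemma delta1_mulVec (hF : IsTriFam F) :
    (delta1 F *ᵥ fun e => V e) = fun T : {T // T ∈ F} =>
      ∑ e ∈ T.1.powersetCard 2, triSign T e * V e := by
  ext T
  calc (delta1 F *ᵥ fun e => V e) T = ∑ e ∈ edgesOf F, triSign T e * V e :=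
        sum_coe_sort (edgesOf F) fun e => triSign T e * V e
    _ = ∑ e ∈ T.1.powersetCard 2, triSign T e * V e := by
        refine (sum_subset (powersetCard_two_subset_edgesOf T.2) fun e _ he => ?_).symm
        rw [not_ne_iff.mp (mt (triSign_ne_zero_iff (hF.2 T T.2)).mp he), zero_mul]

lemma sum_eq_sum_link (hF : IsTriFam F) (hxy : x ≠ y) (f : Finset ℕ → ℝ) :
    ∑ T ∈ F with {x, y} ⊆ T, f T = ∑ z ∈ link F x y, f {x, y, z} := by
  symm
  refine sum_bij (fun z _ => {x, y, z}) (fun z hz => ?_) (fun z hz z' _ h => ?_)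
    (fun T hT => ?_) fun _ _ => rfl
  · exact mem_filter.mpr ⟨(mem_link.mp hz).2.2, pair_subset_triple x y z⟩
  · obtain ⟨hxz, hyz, -⟩ := mem_link.mp hz
    have : z ∈ ({x, y, z'} : Finset ℕ) := h ▸ by simp
    simpa [hxz.symm, hyz.symm] using this
  · obtain ⟨hTF, hsub⟩ := mem_filter.mp hT
    obtain ⟨z, hxz, hyz, rfl⟩ := exists_triple_eq_of_pair_subset (hF.2 T hTF) hxy hsub
    exact ⟨z, mem_link.mpr ⟨hxz, hyz, hTF⟩, rfl⟩

lemma delta1_transpose_mulVec (hF : IsTriFam F) (hxy : x ≠ y) (he : {x, y} ∈ edgesOf F)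
    (u : Finset ℕ → ℝ) : ((delta1 F)ᵀ *ᵥ fun T => u T) ⟨{x, y}, he⟩ =
      ∑ z ∈ link F x y, triSign {x, y, z} {x, y} * u {x, y, z} :=
  calc ((delta1 F)ᵀ *ᵥ fun T => u T) ⟨{x, y}, he⟩ = ∑ T ∈ F, triSign T {x, y} * u T :=
        sum_coe_sort F fun T => triSign T {x, y} * u T
    _ = ∑ T ∈ F with {x, y} ⊆ T, triSign T {x, y} * u T := by
        refine (sum_filter_of_ne fun T hT hne => ?_).symm
        exact (mem_powersetCard.mp
          ((triSign_ne_zero_iff (hF.2 T hT)).mp (left_ne_zero_of_mul hne))).1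
    _ = _ := sum_eq_sum_link hF hxy _

lemma upLaplacian_mulVec (hF : IsTriFam F) (hxy : x ≠ y) (he : {x, y} ∈ edgesOf F) :
    (((delta1 F)ᵀ * delta1 F) *ᵥ fun e => V e) ⟨{x, y}, he⟩ =
      orderSign x y * ∑ z ∈ link F x y, coboundary (cochainOf V) x y z := by
  rw [← mulVec_mulVec, delta1_mulVec V hF, delta1_transpose_mulVec hF hxy he
    fun T => ∑ e ∈ T.powersetCard 2, triSign T e * V e, mul_sum]
  refine sum_congr rfl fun z hz => ?_
  obtain ⟨hxz, hyz, -⟩ := mem_link.mp hz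
  rw [triSign_triple hxy hxz hyz, sum_triSign_mul V hxy hxz hyz]
  linear_combination (orderSign x y * coboundary (cochainOf V) x y z) *
    cyclicSign_mul_self hxy hxz hyz

variable {V}

lemma isEigencochain_cochainOf (hF : IsTriFam F) (hV : ∃ e ∈ edgesOf F, V e ≠ 0)
    (heig : ((delta1 F)ᵀ * delta1 F) *ᵥ (fun e => V e) = μ • fun e : {e // e ∈ edgesOf F} => V e) :
    IsEigencochain F μ (cochainOf V) where
  antisymm := cochainOf_swap V
  sum_link x y hxy he := by
    have hsum := congrFun heig ⟨{x, y}, he⟩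
    rw [upLaplacian_mulVec V hF hxy he, Pi.smul_apply, smul_eq_mul] at hsum
    rw [cochainOf]
    linear_combination orderSign x y * hsum -
      (∑ z ∈ link F x y, coboundary (cochainOf V) x y z) * orderSign_mul_self hxy
  exists_ne_zero := by
    obtain ⟨e, he, hne⟩ := hV
    obtain ⟨T, -, -, hcard⟩ := mem_edgesOf.mp he
    obtain ⟨x, y, hxy, rfl⟩ := card_eq_two.mp hcard
    have hsign : orderSign x y ≠ 0 := left_ne_zero_of_mul_eq_one (orderSign_mul_self hxy)
    exact ⟨x, y, hxy, he, mul_ne_zero hsign hne⟩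

lemma posSemidef_upLaplacian (F : Finset (Finset ℕ)) : ((delta1 F)ᵀ * delta1 F).PosSemidef := by
  rw [← conjTranspose_eq_transpose_of_trivial]
  exact posSemidef_conjTranspose_mul_self _

lemma trace_upLaplacian (hF : IsTriFam F) : ((delta1 F)ᵀ * delta1 F).trace = 3 * #F := by
  have hrow : ∀ T ∈ F, ∑ e ∈ edgesOf F, triSign T e ^ 2 = 3 := by
    intro T hT
    rw [sum_congr rfl fun e _ => triSign_sq (hF.2 T hT), sum_ite_mem,
      inter_eq_right.mpr (powersetCard_two_subset_edgesOf hT), sum_const, card_powersetCard,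
      hF.2 T hT]
    norm_num [Nat.choose]
  calc ((delta1 F)ᵀ * delta1 F).trace
      = ∑ e : {e // e ∈ edgesOf F}, ∑ T : {T // T ∈ F}, triSign T e ^ 2 := by
        simp only [trace, diag_apply, mul_apply, transpose_apply, delta1, of_apply, sq]
    _ = ∑ T ∈ F, ∑ e ∈ edgesOf F, triSign T e ^ 2 := by
        rw [sum_comm, ← sum_coe_sort F]
        exact sum_congr rfl fun T _ => sum_coe_sort (edgesOf F) fun e => triSign T e ^ 2
    _ = 3 * #F := by rw [sum_congr rfl hrow, sum_const, nsmul_eq_mul, mul_comm]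

lemma le_lam_of_hasSpectralGap (hF : IsTriFam F) (hc : HasSpectralGap c F) : c ≤ lam F := by
  have hne : (delta1 F)ᵀ * delta1 F ≠ 0 := by
    intro h
    have htrace := trace_upLaplacian hF
    rw [h, trace_zero] at htrace
    have : (0 : ℝ) < #F := Nat.cast_pos.mpr hF.1.card_pos
    linarith
  refine le_lambdaMinPos (posSemidef_upLaplacian F) hne fun μ hμ v hv heig => ?_
  obtain ⟨V, rfl⟩ : ∃ V : Finset ℕ → ℝ, v = fun e : {e // e ∈ edgesOf F} => V e :=
    ⟨Function.extend Subtype.val v 0,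
      funext fun e => (Subtype.val_injective.extend_apply v 0 e).symm⟩
  obtain ⟨e, he⟩ := Function.ne_iff.mp hv
  exact hc μ hμ _ (isEigencochain_cochainOf hF ⟨e, e.2, he⟩ heig)

end Incidence

section UpperBound

variable {F : Finset (Finset ℕ)}

lemma card_edgesOf_le_mul_rank_delta1 (hF : IsTriFam F) : #(edgesOf F) ≤ 3 * (delta1 F).rank := by
  rw [← Fintype.card_coe]
  refine card_le_mul_rank_of_card_row_support_le _ (fun T => ?_) fun e => ?_
  · have hT : #T.1 = 3 := hF.2 T T.2
    calc #{e | delta1 F T e ≠ 0} ≤ #(T.1.powersetCard 2) :=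
          card_le_card_of_injOn Subtype.val
            (fun e he => (triSign_ne_zero_iff hT).mp (mem_filter.mp he).2)
            Subtype.val_injective.injOn
      _ = 3 := by rw [card_powersetCard, hT, Nat.choose_succ_self_right]
  · obtain ⟨T, hT, he⟩ := mem_biUnion.mp e.2
    exact ⟨⟨T, hT⟩, (triSign_ne_zero_iff (hF.2 T hT)).mpr he⟩

lemma lam_mul_card_edgesOf_le (hF : IsTriFam F) : lam F * #(edgesOf F) ≤ 9 * #F := by
  have hrank : (#(edgesOf F) : ℝ) ≤ 3 * (delta1 F).rank := by
    exact_mod_cast card_edgesOf_le_mul_rank_delta1 hF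
  have htrace : lam F * (delta1 F).rank ≤ 3 * #F := by
    rw [← trace_upLaplacian hF, ← rank_transpose_mul_self]
    exact lambdaMinPos_mul_rank_le_trace (posSemidef_upLaplacian F)
  calc lam F * #(edgesOf F) ≤ lam F * (3 * (delta1 F).rank) :=
        mul_le_mul_of_nonneg_left hrank lambdaMinPos_nonneg
    _ ≤ 9 * #F := by linarith

lemma card_filter_mem_le_card_edgesOf (hF : IsTriFam F) (x : ℕ) :
    #{T ∈ F | x ∈ T} ≤ #(edgesOf F) := by
  refine card_le_card_of_injOn (fun T => T.erase x) (fun T hT => ?_) fun T hT U hU h => ?_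
  · obtain ⟨hTF, hxT⟩ := mem_filter.mp hT
    exact mem_edgesOf.mpr ⟨T, hTF, erase_subset x T, by rw [card_erase_of_mem hxT, hF.2 T hTF]⟩
  · exact erase_injOn' x (mem_filter.mp hT).2 (mem_filter.mp hU).2 h

lemma card_filter_mem_le_sq (hF : IsTriFam F) (x : ℕ) :
    #{T ∈ F | x ∈ T} ≤ #{e ∈ edgesOf F | x ∈ e} ^ 2 := by
  have hsub : {T ∈ F | x ∈ T} ⊆
      image₂ (· ∪ ·) {e ∈ edgesOf F | x ∈ e} {e ∈ edgesOf F | x ∈ e} := by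
    intro T hT
    obtain ⟨hTF, hxT⟩ := mem_filter.mp hT
    obtain ⟨y, z, hxy, hxz, -, rfl⟩ := exists_triple_eq_of_mem (hF.2 T hTF) hxT
    have hmem {v : ℕ} (hxv : x ≠ v) (hv : {x, v} ⊆ ({x, y, z} : Finset ℕ)) :
        {x, v} ∈ {e ∈ edgesOf F | x ∈ e} :=
      mem_filter.mpr ⟨mem_edgesOf.mpr ⟨_, hTF, hv, card_pair hxv⟩, mem_insert_self x {v}⟩
    exact mem_image₂.mpr ⟨{x, y}, hmem hxy (by grind), {x, z}, hmem hxz (by grind), by grind⟩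
  calc #{T ∈ F | x ∈ T} ≤ _ := card_le_card hsub
    _ ≤ _ := card_image₂_le _ _ _
    _ = _ := (sq _).symm

lemma card_sq_le_card_edgesOf_pow_three (hF : IsTriFam F) : #F ^ 2 ≤ #(edgesOf F) ^ 3 := by
  have hlocal : ∀ x ∈ vertsOf F, #{T ∈ F | x ∈ T} ^ 2 ≤
      #{e ∈ edgesOf F | x ∈ e} * (#(edgesOf F) * #{e ∈ edgesOf F | x ∈ e}) := fun x _ =>
    calc #{T ∈ F | x ∈ T} ^ 2
        ≤ #(edgesOf F) * #{e ∈ edgesOf F | x ∈ e} ^ 2 := by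
          rw [sq]
          exact Nat.mul_le_mul (card_filter_mem_le_card_edgesOf hF x) (card_filter_mem_le_sq hF x)
      _ = #{e ∈ edgesOf F | x ∈ e} * (#(edgesOf F) * #{e ∈ edgesOf F | x ∈ e}) := by ring
  have htriangles : ∑ x ∈ vertsOf F, #{T ∈ F | x ∈ T} = 3 * #F :=
    sum_card_filter_mem (fun T hT => subset_biUnion_of_mem id hT) hF.2
  have hedges : ∑ x ∈ vertsOf F, #{e ∈ edgesOf F | x ∈ e} = 2 * #(edgesOf F) := by
    refine sum_card_filter_mem (fun e he => ?_) fun e he => ?_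
    all_goals obtain ⟨T, hT, hsub, hcard⟩ := mem_edgesOf.mp he
    · exact hsub.trans (subset_biUnion_of_mem id hT)
    · exact hcard
  have hCS := sum_sq_le_sum_mul_sum_of_sq_le_mul (vertsOf F) (fun _ _ => Nat.zero_le _)
    (fun _ _ => Nat.zero_le _) hlocal
  rw [← mul_sum, htriangles, hedges] at hCS
  nlinarith [hCS]

lemma lam_pow_three_le (hF : IsTriFam F) : lam F ^ 3 ≤ 9 ^ 3 * #F := by
  have hpos : (0 : ℝ) < #F ^ 2 := pow_pos (Nat.cast_pos.mpr hF.1.card_pos) 2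
  have hlam : 0 ≤ lam F := lambdaMinPos_nonneg
  have hcard : (#F : ℝ) ^ 2 ≤ #(edgesOf F) ^ 3 := by
    exact_mod_cast card_sq_le_card_edgesOf_pow_three hF
  refine le_of_mul_le_mul_right ?_ hpos
  calc lam F ^ 3 * #F ^ 2 ≤ lam F ^ 3 * #(edgesOf F) ^ 3 := by gcongr
    _ = (lam F * #(edgesOf F)) ^ 3 := (mul_pow _ _ _).symm
    _ ≤ (9 * #F) ^ 3 := pow_le_pow_left₀ (by positivity) (lam_mul_card_edgesOf_le hF) 3
    _ = 9 ^ 3 * #F * #F ^ 2 := by ring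

lemma lam_le_rpow (hF : IsTriFam F) : lam F ≤ 9 * (#F : ℝ) ^ ((1 : ℝ) / 3) := by
  refine le_of_pow_le_pow_left₀ three_ne_zero (by positivity) ?_
  rw [mul_pow, rpow_one_third_pow_three (Nat.cast_nonneg _)]
  exact lam_pow_three_le hF

end UpperBound

section Phi

variable {F : Finset (Finset ℕ)} {c t : ℕ} {a : ℝ}

lemma phi_le_rpow (t : ℕ) : phi t ≤ 9 * (t : ℝ) ^ ((1 : ℝ) / 3) := by
  refine Real.sSup_le ?_ (by positivity)
  rintro r ⟨F, hF, rfl, rfl⟩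
  exact lam_le_rpow hF

lemma lam_le_phi (hF : IsTriFam F) : lam F ≤ phi #F := by
  refine le_csSup ⟨9 * (#F : ℝ) ^ ((1 : ℝ) / 3), ?_⟩ ⟨F, hF, rfl, rfl⟩
  rintro r ⟨G, hG, hcard, rfl⟩
  exact hcard ▸ lam_le_rpow hG

lemma IsRealizable.le_phi (h : IsRealizable c t) : (c : ℝ) ≤ phi t := by
  obtain ⟨F, hF, rfl, hc, -⟩ := h ∅
  exact (le_lam_of_hasSpectralGap hF hc).trans (lam_le_phi hF)

lemma natFloor_le_phi (ha : 3 ≤ a) (ht : 3 * a ^ 3 ≤ t) : (⌊a⌋₊ : ℝ) ≤ phi t := by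
  have hfloor : (⌊a⌋₊ : ℝ) ≤ a := Nat.floor_le (by linarith)
  have hcube : 3 * (⌊a⌋₊ : ℝ) ^ 3 ≤ t := le_trans (by gcongr) ht
  exact (isRealizable_of_three_mul_cube_le (Nat.le_floor ha) (mod_cast hcube)).le_phi

lemma intFloor_le_phi (ha : 3 ≤ a) (ht : 3 * a ^ 3 ≤ t) : (⌊a⌋ : ℝ) ≤ phi t :=
  (natCast_floor_eq_intCast_floor (by linarith)).symm.trans_le (natFloor_le_phi ha ht)

lemma half_mul_le_phi (ha : 3 ≤ a) (ht : 3 * a ^ 3 ≤ t) : 1 / 2 * a ≤ phi t := by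
  have hfloor := Nat.lt_floor_add_one a
  linarith [natFloor_le_phi ha ht]

lemma phi_le_Lam (ht : 1 ≤ t) : phi t ≤ Lam t := by
  refine le_csSup (((Set.finite_Iic t).image phi).bddAbove.mono ?_) ⟨t, ht, le_rfl, rfl⟩
  rintro r ⟨s, -, hst, rfl⟩
  exact Set.mem_image_of_mem phi hst

end Phi

/-- For every `t ≥ 81`, `φ(t) ≥ ⌊(t/3)^{1/3}⌋`, hence `φ(t) ≥ (1/2)(t/3)^{1/3}`;
moreover `φ(t) ≤ Λ(t)`, and `φ(t) = Θ(t^{1/3})`. -/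
theorem stmt19 :
    (∀ t : ℕ, 81 ≤ t →
      ((⌊((t : ℝ) / 3) ^ ((1 : ℝ) / 3)⌋ : ℝ) ≤ phi t ∧
        (1 / 2) * ((t : ℝ) / 3) ^ ((1 : ℝ) / 3) ≤ phi t)) ∧
    (∀ t : ℕ, 1 ≤ t → phi t ≤ Lam t) ∧
    (∃ c₁ c₂ : ℝ, 0 < c₁ ∧ 0 < c₂ ∧ ∃ N : ℕ, ∀ t : ℕ, N ≤ t →
      c₁ * (t : ℝ) ^ ((1 : ℝ) / 3) ≤ phi t ∧ phi t ≤ c₂ * (t : ℝ) ^ ((1 : ℝ) / 3)) := by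
  have hcube (t : ℕ) : 3 * (((t : ℝ) / 3) ^ ((1 : ℝ) / 3)) ^ 3 ≤ t := by
    rw [rpow_one_third_pow_three (by positivity)]
    linarith
  have hthree (t : ℕ) (ht : 81 ≤ t) : 3 ≤ ((t : ℝ) / 3) ^ ((1 : ℝ) / 3) := by
    have ht' : (81 : ℝ) ≤ t := mod_cast ht
    exact three_le_rpow_one_third (by linarith)
  have hhalf (t : ℕ) (ht : 81 ≤ t) := half_mul_le_phi (hthree t ht) (hcube t)
  refine ⟨fun t ht => ⟨intFloor_le_phi (hthree t ht) (hcube t), hhalf t ht⟩, fun t => phi_le_Lam,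
    1 / 2 * (1 / 3 : ℝ) ^ ((1 : ℝ) / 3), 9, by positivity, by norm_num, 81,
    fun t ht => ⟨?_, phi_le_rpow t⟩⟩
  calc 1 / 2 * (1 / 3 : ℝ) ^ ((1 : ℝ) / 3) * (t : ℝ) ^ ((1 : ℝ) / 3)
      = 1 / 2 * ((t : ℝ) / 3) ^ ((1 : ℝ) / 3) := by
        rw [mul_assoc, ← Real.mul_rpow (by norm_num) t.cast_nonneg, one_div_mul_eq_div (3 : ℝ)]
    _ ≤ phi t := hhalf t ht
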